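/- Entire graphical self-shrinkers have polynomial volume growth: if Σ = Graph(u) ⊂ ℝⁿ⁺¹ is an entire graphical smooth self-shrinker, then there is a constant C > 0 such that Vol(Σ ∩ B_R) ≤ C R^{n+2} for all R > 1. -/

import Mathlib

open Real MeasureTheory Metric Filter
open scoped RealInnerProductSpace ENNReal NNReal

noncomputable section

abbrev E (n : ℕ) : Type := EuclideanSpace ℝ (Fin n)

variable {n : ℕ}

/-- `√(1 + |Du|²)`, the area element of the graph of `u`. -/
def aEl (u : E n → ℝ) (x : E n) : ℝ := Real.sqrt (1 + ‖gradient u x‖ ^ 2)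

/-- The vector field `Du/√(1+|Du|²)`. -/
def Vfield (u : E n → ℝ) (x : E n) : E n := (aEl u x)⁻¹ • gradient u x

/-- `div (Du/√(1+|Du|²))`. -/
def divV (u : E n → ℝ) (x : E n) : ℝ :=
  ∑ i, fderiv ℝ (fun y => Vfield u y i) x (EuclideanSpace.single i 1)

/-- The self-shrinker equation for an entire graph. -/
def ShrinkerEq (u : E n → ℝ) : Prop :=
  ∀ x, divV u x = (⟪x, gradient u x⟫ - u x) / (2 * aEl u x)

/-- The mean curvature of the graph of `u` with respect to the upward unit normal. -/
def meanCurv (u : E n → ℝ) (x : E n) : ℝ := -divV u x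

/-- The position vector `X = (x, u x)` of a point of the graph. -/
def Pos (u : E n → ℝ) (x : E n) : E (n + 1) :=
  (WithLp.equiv 2 (Fin (n + 1) → ℝ)).symm (Fin.snoc ((WithLp.equiv 2 (Fin n → ℝ)) x) (u x))

/-- The upward unit normal `n = (-Du, 1)/√(1+|Du|²)` at the point of the graph over `x`. -/
def NmlAt (u : E n → ℝ) (x : E n) : E (n + 1) :=
  (WithLp.equiv 2 (Fin (n + 1) → ℝ)).symm
    (Fin.snoc (fun i => -(Vfield u x i)) ((aEl u x)⁻¹))

/-- Projection of `ℝ^{n+1}` onto the first `n` coordinates. -/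
def projE (p : E (n + 1)) : E n :=
  (WithLp.equiv 2 (Fin n → ℝ)).symm fun i => p i.castSucc

/-- The unit normal of the graph, extended to `ℝ^{n+1}` independently of the last coordinate. -/
def Nml (u : E n → ℝ) (p : E (n + 1)) : E (n + 1) := NmlAt u (projE p)

/-- The inverse induced metric `g^{ij} = δ_{ij} - u_i u_j/(1+|Du|²)` of the graph. -/
def ginv (u : E n → ℝ) (x : E n) (i j : Fin n) : ℝ :=
  (if i = j then 1 else 0) - gradient u x i * gradient u x j / (aEl u x) ^ 2

/-- The Hessian `u_{ij}` of `u`. -/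
def hess (u : E n → ℝ) (x : E n) (i j : Fin n) : ℝ :=
  fderiv ℝ (fun y => gradient u y j) x (EuclideanSpace.single i 1)

/-- `|A|²`, the squared norm of the second fundamental form of the graph of `u`:
`|A|² = g^{ik} g^{jl} h_{ij} h_{kl}` with `h_{ij} = u_{ij}/√(1+|Du|²)`. -/
def A2 (u : E n → ℝ) (x : E n) : ℝ :=
  (∑ i, ∑ j, ∑ k, ∑ l, ginv u x i k * ginv u x j l * hess u x i j * hess u x k l) /
    (aEl u x) ^ 2

/-- Coordinate components `g^{ij} ∂_j f` of the tangential gradient. -/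
def gradCoord (u f : E n → ℝ) (x : E n) (i : Fin n) : ℝ :=
  ∑ j, ginv u x i j * gradient f x j

/-- The tangential gradient `∇_Σ f` (for `f` defined on the base, pulled back to the graph),
as a vector in `ℝ^{n+1}`. -/
def gradSigma (u f : E n → ℝ) (x : E n) : E (n + 1) :=
  (WithLp.equiv 2 (Fin (n + 1) → ℝ)).symm
    (Fin.snoc (fun i => gradCoord u f x i) (∑ i, gradient u x i * gradCoord u f x i))

/-- The Laplace–Beltrami operator of the graph:
`Δ_Σ f = (1/√g) ∂_i (√g g^{ij} ∂_j f)`. -/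
def lapSigma (u f : E n → ℝ) (x : E n) : ℝ :=
  (aEl u x)⁻¹ *
    ∑ i, fderiv ℝ (fun y => aEl u y * gradCoord u f y i) x (EuclideanSpace.single i 1)

/-- The tangential gradient `∇_Σ η` of an ambient function `η : ℝ^{n+1} → ℝ` along the graph:
the ambient gradient minus its normal component. -/
def gradSigmaAmb (u : E n → ℝ) (η : E (n + 1) → ℝ) (x : E n) : E (n + 1) :=
  gradient η (Pos u x) - ⟪gradient η (Pos u x), NmlAt u x⟫ • NmlAt u x

/-- `Vol(Σ ∩ B_R)`: the area of the part of the graph inside the ball of radius `R`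
in `ℝ^{n+1}`, computed by the area formula. -/
def sVol (u : E n → ℝ) (R : ℝ) : ℝ := ∫ x in {x : E n | ‖Pos u x‖ ≤ R}, aEl u x

/-- `M_R = sup_{|x| ≤ R} |u|`. -/
def supBall (u : E n → ℝ) (R : ℝ) : ℝ := ⨆ x : Metric.closedBall (0 : E n) R, |u x.1|

end

/-!
Let `X` be the position vector of the graph and `ν` its upward unit normal. By the shrinker
equation the tangential part of `X` has divergence `n - ⟨X, ν⟩² / 2` on the graph. Testing this
against the cut-off `(t - |X|²)₊²` shows that the moments `F t = ∫ (t - |X|²)₊²` and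
`P t = ∫ (t - |X|²)₊² ⟨X, ν⟩²` over the graph satisfy `P ≤ 2nF` and
`t F' - P' = (n + 4)/2 F - P/4`. Hence `(t F - P) t ^ (-(n + 6)/2)` is eventually decreasing, so `F`
is `O(t ^ ((n + 4)/2))`. On `B_R` the cut-off with `t = 2R²` is at least `R⁴`, which leaves a bound
`C Rⁿ` for the volume.
-/

section PosPart

open scoped Topology

lemma hasDerivAt_max_zero_pow {k : ℕ} (hk : k ≠ 0) (y : ℝ) :
    HasDerivAt (fun z : ℝ => max z 0 ^ (k + 1)) ((k + 1) * max y 0 ^ k) y := by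
  rcases lt_trichotomy y 0 with hy | rfl | hy
  · have hzero : (fun z : ℝ => max z 0 ^ (k + 1)) =ᶠ[𝓝 y] fun _ => 0 := by
      filter_upwards [gt_mem_nhds hy] with z hz
      simp [max_eq_right hz.le]
    simpa [max_eq_right hy.le, hk] using (hasDerivAt_const y (0 : ℝ)).congr_of_eventuallyEq hzero
  · have hO : (fun z : ℝ => max z 0 ^ (k + 1)) =O[𝓝 0] fun z => z ^ (k + 1) :=
      Asymptotics.isBigO_of_le _ fun z => by
        have habs : |max z 0| ≤ |z| := by simpa using abs_max_sub_max_le_abs z 0 0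
        simpa only [norm_pow, Real.norm_eq_abs] using
          pow_le_pow_left₀ (abs_nonneg _) habs (k + 1)
    simpa [hasDerivAt_iff_isLittleO, hk] using hO.trans_isLittleO
      (Asymptotics.isLittleO_pow_id (by omega : 1 < k + 1))
  · have hpow : (fun z : ℝ => max z 0 ^ (k + 1)) =ᶠ[𝓝 y] fun z => z ^ (k + 1) := by
      filter_upwards [lt_mem_nhds hy] with z hz
      rw [max_eq_left hz.le]
    simpa [max_eq_left hy.le] using (hasDerivAt_pow (k + 1) y).congr_of_eventuallyEq hpow

lemma contDiff_max_zero_pow {k : ℕ} (hk : k ≠ 0) :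
    ContDiff ℝ 1 fun z : ℝ => max z 0 ^ (k + 1) := by
  have hderiv : deriv (fun z : ℝ => max z 0 ^ (k + 1)) = fun z : ℝ => (k + 1) * max z 0 ^ k :=
    funext fun z => (hasDerivAt_max_zero_pow hk z).deriv
  refine contDiff_one_iff_deriv.2
    ⟨fun z => (hasDerivAt_max_zero_pow hk z).differentiableAt, ?_⟩
  rw [hderiv]
  fun_prop

end PosPart

section CutMoment

variable {X : Type*} {s w w₁ w₂ : X → ℝ} {k : ℕ}

lemma hasCompactSupport_cut [TopologicalSpace X] (hs : Continuous s)
    (hcpt : ∀ t, IsCompact {x | s x ≤ t}) (hk : k ≠ 0) (t : ℝ) :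
    HasCompactSupport fun x => max (t - s x) 0 ^ k := by
  refine (hcpt t).of_isClosed_subset (isClosed_tsupport _)
    (closure_minimal (fun x hx => ?_) (isClosed_le hs continuous_const))
  contrapose! hx
  have hneg : t - s x ≤ 0 := (sub_neg.2 (not_le.1 hx)).le
  simp [max_eq_right hneg, hk]

variable [MeasurableSpace X] {μ : Measure X}

/-- The moment `∫ (t - s)₊ᵏ w dμ` of the weight `w`, cut off outside the sublevel set `{s ≤ t}`. -/
noncomputable def cutMoment (μ : Measure X) (s w : X → ℝ) (k : ℕ) (t : ℝ) : ℝ :=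
  ∫ x, max (t - s x) 0 ^ k * w x ∂μ

lemma cutMoment_nonneg (hw : ∀ x, 0 ≤ w x) (t : ℝ) : 0 ≤ cutMoment μ s w k t :=
  integral_nonneg fun x => mul_nonneg (pow_nonneg (le_max_right _ _) k) (hw x)

lemma cutMoment_const_mul (c t : ℝ) :
    cutMoment μ s (fun x => c * w x) k t = c * cutMoment μ s w k t := by
  simp only [cutMoment, mul_left_comm _ c, integral_const_mul]

variable [TopologicalSpace X] [OpensMeasurableSpace X] [IsFiniteMeasureOnCompacts μ]

lemma integrable_cut_mul (hs : Continuous s) (hcpt : ∀ t, IsCompact {x | s x ≤ t})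
    (hw : Continuous w) (hk : k ≠ 0) (t : ℝ) :
    Integrable (fun x => max (t - s x) 0 ^ k * w x) μ :=
  Continuous.integrable_of_hasCompactSupport (by fun_prop)
    (hasCompactSupport_cut hs hcpt hk t).mul_right

lemma cutMoment_sub (hs : Continuous s) (hcpt : ∀ t, IsCompact {x | s x ≤ t})
    (hw₁ : Continuous w₁) (hw₂ : Continuous w₂) (hk : k ≠ 0) (t : ℝ) :
    cutMoment μ s (fun x => w₁ x - w₂ x) k t = cutMoment μ s w₁ k t - cutMoment μ s w₂ k t := by
  simp only [cutMoment, mul_sub]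
  exact integral_sub (integrable_cut_mul hs hcpt hw₁ hk t) (integrable_cut_mul hs hcpt hw₂ hk t)

lemma cutMoment_mul_self (hs : Continuous s) (hcpt : ∀ t, IsCompact {x | s x ≤ t})
    (hw : Continuous w) (hk : k ≠ 0) (t : ℝ) :
    cutMoment μ s (fun x => s x * w x) k t =
      t * cutMoment μ s w k t - cutMoment μ s w (k + 1) t := by
  have hpt : ∀ x, max (t - s x) 0 ^ k * (s x * w x) =
      t * (max (t - s x) 0 ^ k * w x) - max (t - s x) 0 ^ (k + 1) * w x := by
    intro x
    rcases le_total (t - s x) 0 with h | h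
    · simp [max_eq_right h, hk]
    · rw [max_eq_left h]
      ring
  simp only [cutMoment, hpt]
  rw [integral_sub ((integrable_cut_mul hs hcpt hw hk t).const_mul t)
    (integrable_cut_mul hs hcpt hw k.succ_ne_zero t), integral_const_mul]

lemma hasDerivAt_cutMoment (hs : Continuous s) (hcpt : ∀ t, IsCompact {x | s x ≤ t})
    (hw : Continuous w) (hk : k ≠ 0) (t : ℝ) :
    HasDerivAt (cutMoment μ s w (k + 1)) ((k + 1) * cutMoment μ s w k t) t := by
  have hderiv : ∀ x r, HasDerivAt (fun r => max (r - s x) 0 ^ (k + 1) * w x)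
      ((k + 1) * (max (r - s x) 0 ^ k * w x)) r := fun x r => by
    simpa only [mul_assoc] using
      ((hasDerivAt_max_zero_pow hk (r - s x)).comp_sub_const r (s x)).mul_const (w x)
  have hbound : ∀ x, ∀ r ∈ ball t 1, ‖(k + 1) * (max (r - s x) 0 ^ k * w x)‖ ≤
      (k + 1) * (max (t + 1 - s x) 0 ^ k * |w x|) := by
    intro x r hr
    have hrt : r ≤ t + 1 := by linarith [(abs_lt.1 (Real.dist_eq r t ▸ mem_ball.1 hr)).2]
    have hcut : 0 ≤ max (r - s x) 0 := le_max_right _ _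
    rw [Real.norm_eq_abs, abs_mul, abs_mul, abs_of_nonneg (pow_nonneg hcut k),
      abs_of_nonneg (by positivity : (0 : ℝ) ≤ k + 1)]
    gcongr
  have h := (hasDerivAt_integral_of_dominated_loc_of_deriv_le (μ := μ)
    (ball_mem_nhds t one_pos)
    (Eventually.of_forall fun r =>
      (integrable_cut_mul hs hcpt hw k.succ_ne_zero r).aestronglyMeasurable)
    (integrable_cut_mul hs hcpt hw k.succ_ne_zero t)
    ((integrable_cut_mul hs hcpt hw hk t).const_mul _).aestronglyMeasurable
    (Eventually.of_forall hbound)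
    ((integrable_cut_mul hs hcpt hw.abs hk (t + 1)).const_mul _)
    (Eventually.of_forall fun x r _ => hderiv x r)).2
  rwa [integral_const_mul] at h

lemma pow_mul_setIntegral_le_cutMoment (hs : Continuous s)
    (hcpt : ∀ t, IsCompact {x | s x ≤ t}) (hw : Continuous w) (hw₀ : ∀ x, 0 ≤ w x)
    (hk : k ≠ 0) {r : ℝ} (hr : 0 ≤ r) (t : ℝ) :
    r ^ k * ∫ x in {x | s x ≤ t}, w x ∂μ ≤ cutMoment μ s w k (t + r) := by
  have hmeas : MeasurableSet {x | s x ≤ t} := (isClosed_le hs continuous_const).measurableSet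
  have hint := integrable_cut_mul (μ := μ) hs hcpt hw hk (t + r)
  calc r ^ k * ∫ x in {x | s x ≤ t}, w x ∂μ
      = ∫ x in {x | s x ≤ t}, r ^ k * w x ∂μ := (integral_const_mul _ _).symm
    _ ≤ ∫ x in {x | s x ≤ t}, max (t + r - s x) 0 ^ k * w x ∂μ := by
      refine setIntegral_mono_on
        ((hw.continuousOn.integrableOn_compact' (hcpt t) hmeas).const_mul _) hint.integrableOn
        hmeas fun x hx => ?_
      have hrx : r ≤ max (t + r - s x) 0 := le_max_of_le_left (by linarith [Set.mem_ofPred.1 hx])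
      have := hw₀ x
      gcongr
    _ ≤ cutMoment μ s w k (t + r) :=
      setIntegral_le_integral hint <| Eventually.of_forall fun x =>
        mul_nonneg (pow_nonneg (le_max_right _ _) k) (hw₀ x)

end CutMoment

section Divergence

variable {V : Type*} [NormedAddCommGroup V] [NormedSpace ℝ V]

/-- The divergence of a vector field on a finite-dimensional space, as the trace of its derivative;
this does not depend on coordinates. -/
noncomputable def divergence (Z : V → V) (x : V) : ℝ := LinearMap.trace ℝ V (fderiv ℝ Z x)

lemma divergence_add {Y Z : V → V} {x : V} (hY : DifferentiableAt ℝ Y x)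
    (hZ : DifferentiableAt ℝ Z x) :
    divergence (fun y => Y y + Z y) x = divergence Y x + divergence Z x := by
  simp [divergence, fderiv_fun_add hY hZ]

variable [FiniteDimensional ℝ V]

lemma divergence_fun_id (x : V) : divergence (fun y : V => y) x = Module.finrank ℝ V := by
  simp [divergence]

lemma divergence_smul {f : V → ℝ} {Z : V → V} {x : V} (hf : DifferentiableAt ℝ f x)
    (hZ : DifferentiableAt ℝ Z x) :
    divergence (fun y => f y • Z y) x = f x * divergence Z x + fderiv ℝ f x (Z x) := by
  simp [divergence, fderiv_fun_smul hf hZ]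

lemma divergence_eq_sum {ι : Type*} [Fintype ι] (b : Module.Basis ι ℝ V) {Z : V → V} {x : V}
    (hZ : DifferentiableAt ℝ Z x) :
    divergence Z x = ∑ i, fderiv ℝ (fun y => b.repr (Z y) i) x (b i) := by
  classical
  have hcoord i : HasFDerivAt (fun y => b.repr (Z y) i)
      ((b.coord i).toContinuousLinearMap ∘L fderiv ℝ Z x) x :=
    (b.coord i).toContinuousLinearMap.hasFDerivAt.comp x hZ.hasFDerivAt
  simp [divergence, LinearMap.trace_eq_matrix_trace ℝ b, Matrix.trace, LinearMap.toMatrix_apply,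
    (hcoord _).fderiv]

variable [MeasurableSpace V] [BorelSpace V] {μ : Measure V} [μ.IsAddHaarMeasure]

lemma integral_mul_divergence {f : V → ℝ} {Z : V → V} (hf : ContDiff ℝ 1 f)
    (hfc : HasCompactSupport f) (hZ : ContDiff ℝ 1 Z) :
    ∫ x, f x * divergence Z x ∂μ = -∫ x, fderiv ℝ f x (Z x) ∂μ := by
  set b := Module.finBasis ℝ V
  have hcoord i : ContDiff ℝ 1 fun x => b.repr (Z x) i :=
    (b.coord i).toContinuousLinearMap.contDiff.comp hZ
  have hf' v : Continuous fun x => fderiv ℝ f x v :=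
    (hf.continuous_fderiv one_ne_zero).clm_apply continuous_const
  have hcoord' i v : Continuous fun x => fderiv ℝ (fun y => b.repr (Z y) i) x v :=
    ((hcoord i).continuous_fderiv one_ne_zero).clm_apply continuous_const
  have hI i : Integrable (fun x => f x * fderiv ℝ (fun y => b.repr (Z y) i) x (b i)) μ :=
    (hf.continuous.mul (hcoord' i _)).integrable_of_hasCompactSupport hfc.mul_right
  have hJ i : Integrable (fun x => fderiv ℝ f x (b i) * b.repr (Z x) i) μ :=
    ((hf' _).mul (hcoord i).continuous).integrable_of_hasCompactSupport
      (hfc.fderiv_apply ℝ _).mul_right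
  have hfZ x : fderiv ℝ f x (Z x) = ∑ i, fderiv ℝ f x (b i) * b.repr (Z x) i := by
    conv_lhs => rw [← b.sum_repr (Z x)]
    simp only [map_sum, map_smul, smul_eq_mul, mul_comm]
  simp only [divergence_eq_sum b (hZ.differentiable one_ne_zero _), hfZ, Finset.mul_sum]
  rw [integral_finsetSum _ fun i _ => hI i, integral_finsetSum _ fun i _ => hJ i,
    ← Finset.sum_neg_distrib]
  exact Finset.sum_congr rfl fun i _ => integral_mul_fderiv_eq_neg_fderiv_mul_of_integrable
    (hJ i) (hI i)
    ((hf.continuous.mul (hcoord i).continuous).integrable_of_hasCompactSupport hfc.mul_right)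
    (fun x _ => hf.differentiable one_ne_zero x)
    (fun x _ => (hcoord i).differentiable one_ne_zero x)

lemma cutMoment_divergence {s : V → ℝ} {Z : V → V} {k : ℕ} (hs : ContDiff ℝ 1 s)
    (hcpt : ∀ t, IsCompact {x | s x ≤ t}) (hZ : ContDiff ℝ 1 Z) (hk : k ≠ 0) (t : ℝ) :
    cutMoment μ s (divergence Z) (k + 1) t =
      (k + 1) * cutMoment μ s (fun x => fderiv ℝ s x (Z x)) k t := by
  have hcut x : fderiv ℝ (fun y => max (t - s y) 0 ^ (k + 1)) x (Z x) =
      -((k + 1) * (max (t - s x) 0 ^ k * fderiv ℝ s x (Z x))) := by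
    have h := (hasDerivAt_max_zero_pow hk (t - s x)).comp_hasFDerivAt x
      ((hs.differentiable one_ne_zero x).hasFDerivAt.const_sub t)
    simp only [Function.comp_def] at h
    simp [h.fderiv, mul_assoc]
  have hcutdiff : ContDiff ℝ 1 fun x => max (t - s x) 0 ^ (k + 1) :=
    (contDiff_max_zero_pow hk).comp (contDiff_const.sub hs)
  rw [cutMoment, integral_mul_divergence hcutdiff
    (hasCompactSupport_cut hs.continuous hcpt k.succ_ne_zero t) hZ]
  simp only [hcut, integral_neg, neg_neg, integral_const_mul, cutMoment]

end Divergence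

section Growth

variable {F P F' P' : ℝ → ℝ} {p ε c : ℝ}

lemma antitoneOn_mul_sub_mul_rpow (hF : ∀ t, HasDerivAt F (F' t) t)
    (hP : ∀ t, HasDerivAt P (P' t) t) (hP₀ : ∀ t, 0 ≤ P t) (hε : 0 < ε)
    (h : ∀ t, t * F' t - P' t ≤ p * F t - ε * P t) {t₀ : ℝ} (ht₀ : 0 < t₀)
    (hpt₀ : p + 1 ≤ ε * t₀) :
    AntitoneOn (fun t => (t * F t - P t) * t ^ (-(p + 1))) (Set.Ici t₀) := by
  have hderiv : ∀ t ∈ Set.Ici t₀, HasDerivAt (fun t => (t * F t - P t) * t ^ (-(p + 1)))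
      ((1 * F t + t * F' t - P' t) * t ^ (-(p + 1)) +
        (t * F t - P t) * (-(p + 1) * t ^ (-(p + 1) - 1))) t := fun t ht =>
    (((hasDerivAt_id t).mul (hF t)).sub (hP t)).mul
      (Real.hasDerivAt_rpow_const (Or.inl (ht₀.trans_le ht).ne'))
  refine antitoneOn_of_hasDerivWithinAt_nonpos (convex_Ici _)
    (fun t ht => (hderiv t ht).continuousAt.continuousWithinAt)
    (fun t ht => (hderiv t (interior_subset ht)).hasDerivWithinAt) fun t ht => ?_
  have htt₀ : t₀ ≤ t := interior_subset ht
  have ht : 0 < t := ht₀.trans_le htt₀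
  have hpt : p + 1 ≤ ε * t := hpt₀.trans (by gcongr)
  have hpow : t ^ (-(p + 1)) = t ^ (-(p + 1) - 1) * t := by
    rw [← Real.rpow_add_one ht.ne', sub_add_cancel]
  calc (1 * F t + t * F' t - P' t) * t ^ (-(p + 1)) +
        (t * F t - P t) * (-(p + 1) * t ^ (-(p + 1) - 1))
      = t ^ (-(p + 1) - 1) * (t * (t * F' t - P' t) - p * t * F t + (p + 1) * P t) := by
        rw [hpow]
        ring
    _ ≤ t ^ (-(p + 1) - 1) * (t * (p * F t - ε * P t) - p * t * F t + (p + 1) * P t) := by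
        refine mul_le_mul_of_nonneg_left ?_ (Real.rpow_nonneg ht.le _)
        linarith [mul_le_mul_of_nonneg_left (h t) ht.le]
    _ = -(t ^ (-(p + 1) - 1) * ((ε * t - (p + 1)) * P t)) := by ring
    _ ≤ 0 := neg_nonpos.2 <| mul_nonneg (Real.rpow_nonneg ht.le _)
        (mul_nonneg (sub_nonneg.2 hpt) (hP₀ t))

lemma isBigO_rpow_of_mul_deriv_sub_le (hF : ∀ t, HasDerivAt F (F' t) t)
    (hP : ∀ t, HasDerivAt P (P' t) t) (hF₀ : ∀ t, 0 ≤ F t) (hP₀ : ∀ t, 0 ≤ P t)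
    (hPF : ∀ t, P t ≤ c * F t) (hε : 0 < ε) (h : ∀ t, t * F' t - P' t ≤ p * F t - ε * P t) :
    F =O[atTop] fun t => t ^ p := by
  set t₀ := max 1 ((p + 1) / ε)
  have ht₀ : 0 < t₀ := lt_max_of_lt_left one_pos
  have hpt₀ : p + 1 ≤ ε * t₀ := (div_le_iff₀' hε).1 (le_max_right _ _)
  have hanti := antitoneOn_mul_sub_mul_rpow hF hP hP₀ hε h ht₀ hpt₀
  set G := fun t => (t * F t - P t) * t ^ (-(p + 1)) with hG
  refine .of_bound (2 * G t₀) ?_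
  filter_upwards [eventually_ge_atTop t₀, eventually_ge_atTop (2 * c)] with t ht htc
  have htpos : 0 < t := ht₀.trans_le ht
  have hhalf : t * F t / 2 ≤ t * F t - P t := by
    nlinarith [hPF t, mul_le_mul_of_nonneg_right htc (hF₀ t)]
  have hGt : t * F t - P t = G t * (t ^ p * t) := by
    rw [hG, ← Real.rpow_add_one htpos.ne', mul_assoc, ← Real.rpow_add htpos, neg_add_cancel,
      Real.rpow_zero, mul_one]
  have hGanti : G t ≤ G t₀ := hanti Set.self_mem_Ici ht ht
  rw [Real.norm_of_nonneg (hF₀ t), Real.norm_of_nonneg (by positivity)]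
  refine le_of_mul_le_mul_right ?_ htpos
  calc F t * t = 2 * (t * F t / 2) := by ring
    _ ≤ 2 * (G t * (t ^ p * t)) := by rw [← hGt]; gcongr
    _ ≤ 2 * (G t₀ * (t ^ p * t)) := by gcongr
    _ = 2 * G t₀ * t ^ p * t := by ring

end Growth

section Gradient

variable {V : Type*} [NormedAddCommGroup V] [InnerProductSpace ℝ V] [CompleteSpace V] {u : V → ℝ}

lemma contDiff_gradient {m k : WithTop ℕ∞} (hu : ContDiff ℝ m u) (hkm : k + 1 ≤ m) :
    ContDiff ℝ k (gradient u) :=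
  (InnerProductSpace.toDual ℝ V).symm.toContinuousLinearEquiv.contDiff.comp (hu.fderiv_right hkm)

lemma inner_fderiv_gradient_comm {x : V} (hu : ContDiffAt ℝ 2 u x) (v w : V) :
    ⟪fderiv ℝ (gradient u) x v, w⟫ = ⟪fderiv ℝ (gradient u) x w, v⟫ := by
  have hdual v w : ⟪fderiv ℝ (gradient u) x v, w⟫ = fderiv ℝ (fderiv ℝ u) x v w := by
    have hcomp : gradient u = (InnerProductSpace.toDual ℝ V).symm ∘ fderiv ℝ u := rfl
    rw [hcomp, (InnerProductSpace.toDual ℝ V).symm.comp_fderiv]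
    exact InnerProductSpace.toDual_symm_apply
  rw [hdual, hdual, (hu.isSymmSndFDerivAt (by simp)).eq]

end Gradient

section Graph

variable {n : ℕ} {u : E n → ℝ}

/-- The squared length of the position vector `X = (x, u x)` of the graph of `u`. -/
noncomputable def posSq (u : E n → ℝ) (x : E n) : ℝ := ‖Pos u x‖ ^ 2

/-- The support function `⟨X, ν⟩` of the graph of `u`, with `ν` the upward unit normal. -/
noncomputable def supportFn (u : E n → ℝ) (x : E n) : ℝ := ⟪Pos u x, NmlAt u x⟫

/-- The height over the origin of the tangent hyperplane to the graph of `u` at `(x, u x)`. -/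
noncomputable def tangentHeight (u : E n → ℝ) (x : E n) : ℝ := u x - ⟪x, gradient u x⟫

/-- The density `|X^⊥|² √(1+|Du|²)` of the squared normal part of the position vector, with respect
to Lebesgue measure on the base of the graph of `u`. -/
noncomputable def normalSq (u : E n → ℝ) (x : E n) : ℝ := supportFn u x ^ 2 * aEl u x

/-- The base components of the tangential part `X - ⟨X, ν⟩ν` of the position vector, multiplied by
the area element so that its Euclidean divergence is the area density of `div_Σ X^⊤`. -/
noncomputable def posTan (u : E n → ℝ) (x : E n) : E n :=
  aEl u x • projE (Pos u x - supportFn u x • NmlAt u x)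

lemma aEl_pos (u : E n → ℝ) (x : E n) : 0 < aEl u x := by
  unfold aEl
  positivity

lemma aEl_sq (u : E n → ℝ) (x : E n) : aEl u x ^ 2 = 1 + ‖gradient u x‖ ^ 2 :=
  Real.sq_sqrt (by positivity)

lemma posSq_eq (u : E n → ℝ) (x : E n) : posSq u x = ‖x‖ ^ 2 + u x ^ 2 := by
  simp [Pos, posSq, EuclideanSpace.norm_sq_eq, Fin.sum_univ_castSucc]

lemma norm_NmlAt (u : E n → ℝ) (x : E n) : ‖NmlAt u x‖ = 1 := by
  have hsq : ‖NmlAt u x‖ ^ 2 = (aEl u x)⁻¹ ^ 2 * (1 + ‖gradient u x‖ ^ 2) := by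
    rw [mul_one_add, add_comm (_ ^ 2)]
    simp [NmlAt, Vfield, EuclideanSpace.norm_sq_eq, Fin.sum_univ_castSucc, mul_pow,
      ← Finset.mul_sum]
  rw [← aEl_sq, ← mul_pow, inv_mul_cancel₀ (aEl_pos u x).ne', one_pow] at hsq
  exact (pow_eq_one_iff_of_nonneg (norm_nonneg _) two_ne_zero).1 hsq

lemma aEl_mul_supportFn (u : E n → ℝ) (x : E n) :
    aEl u x * supportFn u x = tangentHeight u x := by
  have ha := (aEl_pos u x).ne'
  have hsum : supportFn u x = (aEl u x)⁻¹ * tangentHeight u x := by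
    have hinner : ⟪x, gradient u x⟫ = ∑ i, gradient u x i * x i := PiLp.inner_apply _ _
    rw [tangentHeight, hinner]
    suffices -∑ i, (aEl u x)⁻¹ * gradient u x i * x i + (aEl u x)⁻¹ * u x =
        (aEl u x)⁻¹ * (u x - ∑ i, gradient u x i * x i) by
      simpa [supportFn, Pos, NmlAt, Vfield, PiLp.inner_apply, Fin.sum_univ_castSucc] using this
    simp only [mul_assoc, ← Finset.mul_sum]
    ring
  rw [hsum, mul_inv_cancel_left₀ ha]

lemma posTan_eq (u : E n → ℝ) (x : E n) :
    posTan u x = aEl u x • x + tangentHeight u x • Vfield u x := by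
  rw [← aEl_mul_supportFn]
  ext i
  suffices aEl u x * (x i + supportFn u x * Vfield u x i) =
      aEl u x * x i + aEl u x * supportFn u x * Vfield u x i by
    simpa [posTan, projE, Pos, NmlAt] using this
  ring

lemma normalSq_nonneg (u : E n → ℝ) (x : E n) : 0 ≤ normalSq u x :=
  mul_nonneg (sq_nonneg _) (aEl_pos u x).le

lemma normalSq_le (u : E n → ℝ) (x : E n) : normalSq u x ≤ posSq u x * aEl u x := by
  have hcs : |supportFn u x| ≤ ‖Pos u x‖ := by
    simpa only [supportFn, norm_NmlAt, mul_one] using abs_real_inner_le_norm (Pos u x) (NmlAt u x)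
  exact mul_le_mul_of_nonneg_right (sq_le_sq.2 (by simpa using hcs)) (aEl_pos u x).le

lemma isCompact_posSq_le (hu : Continuous u) (t : ℝ) : IsCompact {x | posSq u x ≤ t} := by
  simp only [posSq_eq]
  refine (isCompact_closedBall 0 √t).of_isClosed_subset (isClosed_le (by fun_prop) (by fun_prop))
    fun x hx => ?_
  rw [mem_closedBall_zero_iff]
  exact Real.le_sqrt_of_sq_le ((le_add_of_nonneg_right (sq_nonneg (u x))).trans hx)

lemma contDiff_posSq {m : WithTop ℕ∞} (hu : ContDiff ℝ m u) : ContDiff ℝ m (posSq u) := by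
  simp only [funext (posSq_eq u)]
  exact (contDiff_id.norm_sq ℝ).add (hu.pow 2)

lemma contDiff_aEl (hu : ContDiff ℝ 2 u) : ContDiff ℝ 1 (aEl u) :=
  (contDiff_const.add ((contDiff_gradient hu le_rfl).norm_sq ℝ)).sqrt fun x => by positivity

lemma contDiff_Vfield (hu : ContDiff ℝ 2 u) : ContDiff ℝ 1 (Vfield u) :=
  ((contDiff_aEl hu).inv fun x => (aEl_pos u x).ne').smul (contDiff_gradient hu le_rfl)

lemma contDiff_tangentHeight (hu : ContDiff ℝ 2 u) :
    ContDiff ℝ 1 (tangentHeight u) :=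
  (hu.of_le one_le_two).sub (contDiff_id.inner ℝ (contDiff_gradient hu le_rfl))

lemma contDiff_posTan (hu : ContDiff ℝ 2 u) : ContDiff ℝ 1 (posTan u) := by
  rw [funext (posTan_eq u)]
  exact ((contDiff_aEl hu).smul contDiff_id).add
    ((contDiff_tangentHeight hu).smul (contDiff_Vfield hu))

lemma normalSq_eq (u : E n → ℝ) (x : E n) :
    normalSq u x = tangentHeight u x ^ 2 / aEl u x := by
  have ha := (aEl_pos u x).ne'
  rw [← aEl_mul_supportFn, normalSq]
  field_simp

lemma continuous_normalSq (hu : ContDiff ℝ 2 u) : Continuous (normalSq u) := by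
  rw [funext (normalSq_eq u)]
  exact ((contDiff_tangentHeight hu).continuous.pow 2).div (contDiff_aEl hu).continuous
    fun x => (aEl_pos u x).ne'

lemma fderiv_aEl (hu : ContDiff ℝ 2 u) (x v : E n) :
    fderiv ℝ (aEl u) x v = ⟪Vfield u x, fderiv ℝ (gradient u) x v⟫ := by
  have hgrad := ((contDiff_gradient hu le_rfl).differentiable one_ne_zero x).hasFDerivAt
  have h : HasFDerivAt (aEl u) _ x := (hgrad.norm_sq.const_add 1).sqrt (by positivity)
  simp [h.fderiv, Vfield, real_inner_smul_left, aEl, field]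

lemma fderiv_tangentHeight (hu : ContDiff ℝ 2 u) (x v : E n) :
    fderiv ℝ (tangentHeight u) x v = -⟪x, fderiv ℝ (gradient u) x v⟫ := by
  have hgrad := ((contDiff_gradient hu le_rfl).differentiable one_ne_zero x).hasFDerivAt
  have h : HasFDerivAt (tangentHeight u) _ x :=
    (hu.differentiable two_ne_zero x).hasFDerivAt.sub ((hasFDerivAt_id x).inner ℝ hgrad)
  rw [h.fderiv]
  simp

lemma divV_eq_divergence (hu : ContDiff ℝ 2 u) (x : E n) : divV u x = divergence (Vfield u) x := by
  rw [divergence_eq_sum (EuclideanSpace.basisFun (Fin n) ℝ).toBasis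
    ((contDiff_Vfield hu).differentiable one_ne_zero x)]
  simp [divV]

lemma divergence_posTan (hu : ContDiff ℝ 2 u) (hshr : ShrinkerEq u) (x : E n) :
    divergence (posTan u) x = n * aEl u x - 2⁻¹ * normalSq u x := by
  have ha : DifferentiableAt ℝ (aEl u) x := (contDiff_aEl hu).differentiable one_ne_zero x
  have hh : DifferentiableAt ℝ (tangentHeight u) x :=
    (contDiff_tangentHeight hu).differentiable one_ne_zero x
  have hV : DifferentiableAt ℝ (Vfield u) x := (contDiff_Vfield hu).differentiable one_ne_zero x
  have hdivV : divV u x = -tangentHeight u x / (2 * aEl u x) := by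
    rw [hshr, tangentHeight, neg_sub]
  have hdiv_id : divergence (fun y : E n => y) x = n := by simpa using divergence_fun_id x
  have hsymm : fderiv ℝ (aEl u) x x =
      -fderiv ℝ (tangentHeight u) x (Vfield u x) := by
    rw [fderiv_aEl hu, fderiv_tangentHeight hu, neg_neg, real_inner_comm,
      inner_fderiv_gradient_comm hu.contDiffAt, real_inner_comm]
  rw [funext (posTan_eq u), divergence_add (ha.fun_smul differentiableAt_fun_id) (hh.fun_smul hV),
    divergence_smul ha differentiableAt_fun_id, divergence_smul hh hV, ← divV_eq_divergence hu,
    hdivV, hdiv_id, hsymm, normalSq_eq]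
  ring

lemma fderiv_posSq_posTan (hu : Differentiable ℝ u) (x : E n) :
    fderiv ℝ (posSq u) x (posTan u x) = 2 * (posSq u x * aEl u x - normalSq u x) := by
  have hderiv : HasFDerivAt (fun y => ‖y‖ ^ 2 + u y ^ 2) _ x :=
    (hasFDerivAt_id x).norm_sq.add ((hu x).hasFDerivAt.pow 2)
  have hfderiv v : fderiv ℝ (posSq u) x v = 2 * (⟪x, v⟫ + u x * ⟪gradient u x, v⟫) := by
    simp [funext (posSq_eq u), hderiv.fderiv, mul_add, mul_assoc]
  have ha := (aEl_pos u x).ne'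
  rw [hfderiv, normalSq_eq, posSq_eq, posTan_eq, Vfield, tangentHeight]
  simp only [inner_add_right, real_inner_smul_right, real_inner_self_eq_norm_sq,
    real_inner_comm x (gradient u x)]
  rw [eq_sub_of_add_eq' (aEl_sq u x).symm]
  field_simp
  ring

lemma cutMoment_first_variation (hu : ContDiff ℝ 2 u) (hshr : ShrinkerEq u) (t : ℝ) :
    n * cutMoment volume (posSq u) (aEl u) 2 t - 2⁻¹ * cutMoment volume (posSq u) (normalSq u) 2 t =
      4 * cutMoment volume (posSq u) (fun x => posSq u x * aEl u x - normalSq u x) 1 t := by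
  have hac := (contDiff_aEl hu).continuous
  have hNc := continuous_normalSq hu
  have hs := contDiff_posSq (hu.of_le one_le_two)
  have h := cutMoment_divergence (μ := volume) hs (isCompact_posSq_le hu.continuous)
    (contDiff_posTan hu) one_ne_zero t
  simp only [fderiv_posSq_posTan (hu.differentiable two_ne_zero),
    funext (divergence_posTan hu hshr)] at h
  rw [cutMoment_sub hs.continuous (isCompact_posSq_le hu.continuous) (by fun_prop) (by fun_prop)
    two_ne_zero, cutMoment_const_mul, cutMoment_const_mul, cutMoment_const_mul] at h
  linarith

lemma cutMoment_normalSq_le (hu : ContDiff ℝ 2 u) (hshr : ShrinkerEq u) (t : ℝ) :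
    cutMoment volume (posSq u) (normalSq u) 2 t ≤
      2 * n * cutMoment volume (posSq u) (aEl u) 2 t := by
  have hnonneg := cutMoment_nonneg (μ := volume) (s := posSq u) (k := 1)
    (fun x => sub_nonneg.2 (normalSq_le u x)) t
  linarith [cutMoment_first_variation hu hshr t]

lemma mul_cutMoment_sub_cutMoment_normalSq (hu : ContDiff ℝ 2 u) (hshr : ShrinkerEq u) (t : ℝ) :
    t * (2 * cutMoment volume (posSq u) (aEl u) 1 t) -
        2 * cutMoment volume (posSq u) (normalSq u) 1 t =
      (n + 4) / 2 * cutMoment volume (posSq u) (aEl u) 2 t -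
        1 / 4 * cutMoment volume (posSq u) (normalSq u) 2 t := by
  have hs := (contDiff_posSq hu).continuous
  have hcpt := isCompact_posSq_le hu.continuous
  have ha := (contDiff_aEl hu).continuous
  have h := cutMoment_first_variation hu hshr t
  rw [cutMoment_sub hs hcpt (by fun_prop) (continuous_normalSq hu) one_ne_zero,
    cutMoment_mul_self hs hcpt ha one_ne_zero] at h
  linarith

lemma isBigO_cutMoment_aEl (hu : ContDiff ℝ 2 u) (hshr : ShrinkerEq u) :
    cutMoment volume (posSq u) (aEl u) 2 =O[atTop] fun t => t ^ (((n : ℝ) + 4) / 2) := by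
  have hderiv {w : E n → ℝ} (hw : Continuous w) (t : ℝ) :
      HasDerivAt (cutMoment volume (posSq u) w 2) (2 * cutMoment volume (posSq u) w 1 t) t := by
    simpa [one_add_one_eq_two] using hasDerivAt_cutMoment (μ := volume)
      (contDiff_posSq hu).continuous (isCompact_posSq_le hu.continuous) hw one_ne_zero t
  exact isBigO_rpow_of_mul_deriv_sub_le (hderiv (contDiff_aEl hu).continuous)
    (hderiv (continuous_normalSq hu)) (cutMoment_nonneg fun x => (aEl_pos u x).le)
    (cutMoment_nonneg (normalSq_nonneg u)) (cutMoment_normalSq_le hu hshr) (by norm_num)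
    fun t => (mul_cutMoment_sub_cutMoment_normalSq hu hshr t).le

lemma sq_mul_sVol_le_cutMoment (hu : ContDiff ℝ 2 u) {R r : ℝ} (hR : 0 ≤ R) (hr : 0 ≤ r) :
    r ^ 2 * sVol u R ≤ cutMoment volume (posSq u) (aEl u) 2 (R ^ 2 + r) := by
  have hball : {x | ‖Pos u x‖ ≤ R} = {x | posSq u x ≤ R ^ 2} :=
    Set.ext fun x => (pow_le_pow_iff_left₀ (norm_nonneg _) hR two_ne_zero).symm
  rw [sVol, hball]
  exact pow_mul_setIntegral_le_cutMoment (contDiff_posSq hu).continuous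
    (isCompact_posSq_le hu.continuous) (contDiff_aEl hu).continuous (fun x => (aEl_pos u x).le)
    two_ne_zero hr _

end Graph

theorem stmt_12_general {n : ℕ} {u : E n → ℝ} (hu : ContDiff ℝ 2 u) (hshr : ShrinkerEq u) :
    ∃ C > (0 : ℝ), ∀ R > (1 : ℝ), sVol u R ≤ C * R ^ n := by
  obtain ⟨C, hC, hbound⟩ := (isBigO_cutMoment_aEl hu hshr).exists_pos
  obtain ⟨T, hT⟩ := eventually_atTop.1 hbound.bound
  set r := max T 1
  have hr : 1 ≤ r := le_max_right _ _
  refine ⟨C * (1 + r) ^ (((n : ℝ) + 4) / 2), by positivity, fun R hR => ?_⟩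
  have hR₀ : 0 ≤ R := zero_le_one.trans hR.le
  have hRT : T ≤ (1 + r) * R ^ 2 := by
    nlinarith [le_max_left T 1, one_le_pow₀ (n := 2) hR.le]
  have hpow : (R ^ 2) ^ (((n : ℝ) + 4) / 2) = R ^ 4 * R ^ n := by
    rw [← Real.rpow_natCast_mul hR₀, ← pow_add, ← Real.rpow_natCast]
    congr 1
    push_cast
    ring
  have hvol : 0 ≤ sVol u R := integral_nonneg fun x => (aEl_pos u x).le
  refine le_of_mul_le_mul_left ?_ (by positivity : 0 < R ^ 4)
  calc R ^ 4 * sVol u R ≤ (r * R ^ 2) ^ 2 * sVol u R := by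
        gcongr
        nlinarith [one_le_pow₀ (n := 2) hr, pow_nonneg hR₀ 4]
    _ ≤ cutMoment volume (posSq u) (aEl u) 2 (R ^ 2 + r * R ^ 2) :=
        sq_mul_sVol_le_cutMoment hu hR₀ (by positivity)
    _ = cutMoment volume (posSq u) (aEl u) 2 ((1 + r) * R ^ 2) := by ring_nf
    _ ≤ C * ((1 + r) * R ^ 2) ^ (((n : ℝ) + 4) / 2) := by
        have h := (le_norm_self _).trans (hT _ hRT)
        rwa [Real.norm_of_nonneg (by positivity)] at h
    _ = R ^ 4 * (C * (1 + r) ^ (((n : ℝ) + 4) / 2) * R ^ n) := by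
        rw [Real.mul_rpow (by positivity) (by positivity), hpow]
        ring

/-- entire graphical self-shrinkers have polynomial volume growth:
`Vol(Σ ∩ B_R) ≤ C R^{n+2}` for all `R > 1`. -/
theorem stmt_12 (n : ℕ) (u : E n → ℝ) (hu : ContDiff ℝ (⊤ : ℕ∞) u) (hshr : ShrinkerEq u) :
    ∃ C > (0 : ℝ), ∀ R > (1 : ℝ), sVol u R ≤ C * R ^ (n + 2) := by
  obtain ⟨C, hC, hvol⟩ := stmt_12_general (contDiff_infty.1 hu 2) hshr
  refine ⟨C, hC, fun R hR => (hvol R hR).trans ?_⟩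
  have := hR.le
  gcongr
  · exact Nat.le_add_right n 2
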